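/- (Laplace transform of the Caputo fractional derivative.) Let β ∈ (0,1), let f : [0,∞) → ℝ be continuously differentiable with bounded derivative, and let s > 0. Then ∫₀^∞ e^(−st) (D^β f)(t) dt = s^β ∫₀^∞ e^(−st) f(t) dt − s^(β−1) f(0), where both improper integrals converge and (D^β f)(t) = (1/Γ(1−β)) ∫₀ᵗ (t−u)^(−β) f′(u) du. -/

import Mathlib

open MeasureTheory intervalIntegral

/-- Caputo fractional derivative of order `β` of a real-valued function `f`. -/
noncomputable def caputo (β : ℝ) (f : ℝ → ℝ) (t : ℝ) : ℝ :=
  (1 / Real.Gamma (1 - β)) * ∫ u in (0:ℝ)..t, (t - u) ^ (-β) * deriv f u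

/-- Laplace transform of the Caputo fractional derivative:
`L(D^β f)(s) = s^β · L(f)(s) − s^(β−1) · f(0)` for `s > 0`,
where both improper integrals converge. -/
theorem stmt_16 (β : ℝ) (hβ : β ∈ Set.Ioo (0:ℝ) 1)
    (f : ℝ → ℝ) (hf : ContDiff ℝ 1 f)
    (M : ℝ) (hM : ∀ t : ℝ, |deriv f t| ≤ M)
    (s : ℝ) (hs : 0 < s) :
    IntegrableOn (fun t => Real.exp (-(s * t)) * caputo β f t) (Set.Ioi 0) ∧
    IntegrableOn (fun t => Real.exp (-(s * t)) * f t) (Set.Ioi 0) ∧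
    ∫ t in Set.Ioi (0:ℝ), Real.exp (-(s * t)) * caputo β f t =
      s ^ β * (∫ t in Set.Ioi (0:ℝ), Real.exp (-(s * t)) * f t) - s ^ (β - 1) * f 0 := by
  obtain ⟨hβ0, hβ1⟩ := hβ
  have hexp : IntegrableOn (fun t : ℝ => Real.exp (-(s * t))) (Set.Ioi 0) := by
    simpa [neg_mul] using integrableOn_exp_mul_Ioi (neg_lt_zero.mpr hs) 0
  have hpow : ∀ p : ℝ, -1 < p →
      IntegrableOn (fun t : ℝ => t ^ p * Real.exp (-(s * t))) (Set.Ioi 0) := by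
    intro p hp
    simpa [neg_mul] using integrableOn_rpow_mul_exp_neg_mul_rpow hp one_pos hs
  have hlin : IntegrableOn (fun t : ℝ => t * Real.exp (-(s * t))) (Set.Ioi 0) := by
    simpa using hpow 1 (by norm_num)
  have hd : Differentiable ℝ f := hf.differentiable (by norm_num)
  have hdc : Continuous (deriv f) := hf.continuous_deriv (by norm_num)
  have hfc : Continuous f := hf.continuous
  have hbd : ∀ t : ℝ, 0 < t → |f t| ≤ |f 0| + M * t := by
    intro t ht
    have h := convex_univ.norm_image_sub_le_of_norm_deriv_le (f := f) (C := M) (x := 0) (y := t)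
      (fun x _ => hd x) (fun x _ => hM x) (Set.mem_univ _) (Set.mem_univ _)
    rw [sub_zero, Real.norm_eq_abs, Real.norm_eq_abs, abs_of_pos ht] at h
    have := abs_sub_abs_le_abs_sub (f t) (f 0)
    linarith
  have hA : IntegrableOn (fun t => Real.exp (-(s * t)) * deriv f t) (Set.Ioi 0) := by
    refine Integrable.mono' (hexp.mul_const M) (by fun_prop) (Filter.Eventually.of_forall ?_)
    intro t
    rw [Real.norm_eq_abs, abs_mul, Real.abs_exp]
    exact mul_le_mul_of_nonneg_left (hM t) (Real.exp_pos _).le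
  have hF : IntegrableOn (fun t => Real.exp (-(s * t)) * f t) (Set.Ioi 0) := by
    refine Integrable.mono' ((hexp.const_mul |f 0|).add (hlin.const_mul M)) (by fun_prop) ?_
    filter_upwards [ae_restrict_mem measurableSet_Ioi] with t ht
    rw [Real.norm_eq_abs, abs_mul, Real.abs_exp]
    have := mul_le_mul_of_nonneg_left (hbd t ht) (Real.exp_pos (-(s * t))).le
    simp only [Pi.add_apply]
    linarith
  have hB : IntegrableOn (fun t : ℝ => t ^ (-β) * Real.exp (-(s * t))) (Set.Ioi 0) :=
    hpow (-β) (by linarith)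
  have hBint : ∫ t in Set.Ioi (0:ℝ), t ^ (-β) * Real.exp (-(s * t))
      = s ^ (β - 1) * Real.Gamma (1 - β) := by
    have h := Real.integral_rpow_mul_exp_neg_mul_Ioi (a := 1 - β) (r := s) (by linarith) hs
    rw [show 1 - β - 1 = -β by ring] at h
    rw [h, one_div, Real.inv_rpow hs.le, ← Real.rpow_neg hs.le, neg_sub]
  -- integration by parts
  have hder : ∀ t ∈ Set.Ici (0:ℝ), HasDerivAt (fun t => Real.exp (-(s * t)) * f t)
      (Real.exp (-(s * t)) * deriv f t - s * (Real.exp (-(s * t)) * f t)) t := by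
    intro t _
    have h1 : HasDerivAt (fun t : ℝ => -(s * t)) (-(s * 1)) t :=
      ((hasDerivAt_id t).const_mul s).neg
    have h2 := h1.exp.mul (hd t).hasDerivAt
    convert! h2 using 1
    ring
  have hderI : IntegrableOn (fun t => Real.exp (-(s * t)) * deriv f t
      - s * (Real.exp (-(s * t)) * f t)) (Set.Ioi 0) := hA.sub (hF.const_mul s)
  have htend := tendsto_zero_of_hasDerivAt_of_integrableOn_Ioi
    (fun t ht => hder t (Set.Ioi_subset_Ici_self ht)) hderI hF
  have hparts := integral_Ioi_of_hasDerivAt_of_tendsto' hder hderI htend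
  rw [integral_sub hA (hF.const_mul s), MeasureTheory.integral_const_mul] at hparts
  simp only [mul_zero, neg_zero, Real.exp_zero, one_mul, zero_sub] at hparts
  -- convolution
  have hconv := integral_posConvolution hA hB (ContinuousLinearMap.mul ℝ ℝ)
  have hconvI := integrable_posConvolution hA hB (ContinuousLinearMap.mul ℝ ℝ)
  have hkey : ∀ t : ℝ, Real.exp (-(s * t)) * caputo β f t = (1 / Real.Gamma (1 - β)) *
      ∫ u in (0:ℝ)..t, ContinuousLinearMap.mul ℝ ℝ (Real.exp (-(s * u)) * deriv f u)
        ((t - u) ^ (-β) * Real.exp (-(s * (t - u)))) := by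
    intro t
    rw [caputo, mul_left_comm, ← intervalIntegral.integral_const_mul]
    congr 2
    ext u
    rw [ContinuousLinearMap.mul_apply',
      show -(s * t) = -(s * u) + -(s * (t - u)) by ring, Real.exp_add]
    ring
  have hG : Real.Gamma (1 - β) ≠ 0 := (Real.Gamma_pos_of_pos (by linarith)).ne'
  refine ⟨?_, hF, ?_⟩
  · simp_rw [hkey]
    refine Integrable.const_mul ?_ _
    rw [posConvolution, integrable_indicator_iff measurableSet_Ioi] at hconvI
    exact hconvI
  · simp_rw [hkey]
    rw [MeasureTheory.integral_const_mul, hconv, ContinuousLinearMap.mul_apply', hBint,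
      show ∫ t in Set.Ioi (0:ℝ), Real.exp (-(s * t)) * deriv f t
        = s * (∫ t in Set.Ioi (0:ℝ), Real.exp (-(s * t)) * f t) - f 0 by linarith]
    have hsb : s ^ β = s ^ (β - 1) * s := by
      rw [← Real.rpow_add_one hs.ne', sub_add_cancel]
    rw [hsb]
    field_simp
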